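/- (Theorem 1, unanimous acceptance group rule.) In the two-group voting model, for i ∈ {1,2} and every j ∈ S_i, the expected one-step actual capital increment under the rule that a proposal is accepted iff it is supported by both groups satisfies E[X_j·1_{G₁ ∩ G₂}] = (μ·F_i + σ_i·f_i)·F_{3−i}. -/

import Mathlib

open MeasureTheory ProbabilityTheory Real Set

/-- Density of the standard normal distribution. -/
noncomputable def stdPdf (y : ℝ) : ℝ := (Real.sqrt (2 * Real.pi))⁻¹ * Real.exp (-(y ^ 2) / 2)

/-- Cumulative distribution function of the standard normal distribution. -/
noncomputable def stdCdf (y : ℝ) : ℝ := ∫ x in Set.Iic y, stdPdf x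

lemma stdPdf_neg (y : ℝ) : stdPdf (-y) = stdPdf y := by simp [stdPdf]

lemma gaussianPDFReal_zero_one : gaussianPDFReal 0 1 = stdPdf := by
  ext x
  simp [gaussianPDFReal, stdPdf]

lemma integrable_stdPdf : Integrable stdPdf :=
  gaussianPDFReal_zero_one ▸ integrable_gaussianPDFReal 0 1

lemma integrable_mul_stdPdf : Integrable fun z : ℝ => z * stdPdf z := by
  have h := (integrable_mul_exp_neg_mul_sq (b := 1 / 2) (by norm_num)).const_mul
    (Real.sqrt (2 * Real.pi))⁻¹
  refine h.congr (ae_of_all _ fun z => ?_)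
  simp only [stdPdf]
  rw [show -(1 / 2) * z ^ 2 = -(z ^ 2) / 2 by ring]
  ring

lemma hasDerivAt_stdPdf (z : ℝ) : HasDerivAt stdPdf (-(z * stdPdf z)) z := by
  have h : HasDerivAt (fun y : ℝ => -(y ^ 2) / 2) (-z) z := by
    refine (((hasDerivAt_id z).pow 2).neg.div_const 2).congr_deriv ?_
    norm_num
    ring
  refine (h.exp.const_mul (Real.sqrt (2 * Real.pi))⁻¹).congr_deriv ?_
  simp only [stdPdf]
  ring

lemma tendsto_stdPdf_atTop : Filter.Tendsto stdPdf Filter.atTop (nhds 0) := by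
  have h : Filter.Tendsto (fun y : ℝ => -(y ^ 2) / 2) Filter.atTop Filter.atBot := by
    have h' : Filter.Tendsto (fun y : ℝ => y ^ 2 / 2) Filter.atTop Filter.atTop :=
      (Filter.tendsto_pow_atTop two_ne_zero).atTop_div_const two_pos
    simpa only [neg_div, Function.comp_def] using Filter.tendsto_neg_atTop_atBot.comp h'
  have h' := (Real.tendsto_exp_atBot.comp h).const_mul (Real.sqrt (2 * Real.pi))⁻¹
  rwa [mul_zero] at h'

lemma setIntegral_Ioi_neg_stdPdf (c : ℝ) : ∫ z in Ioi (-c), stdPdf z = stdCdf c := by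
  rw [stdCdf, ← integral_comp_neg_Iic]
  simp only [stdPdf_neg]

lemma setIntegral_Ioi_mul_stdPdf (a : ℝ) : ∫ z in Ioi a, z * stdPdf z = stdPdf a := by
  have h := integral_Ioi_of_hasDerivAt_of_tendsto' (a := a) (fun z _ => hasDerivAt_stdPdf z)
    integrable_mul_stdPdf.neg.integrableOn tendsto_stdPdf_atTop
  rw [integral_neg] at h
  linarith

/-- An integral over a half-line against `N(m, s²)`, rewritten in the standardized variable. -/
lemma setIntegral_Ioi_gaussianReal (m t : ℝ) {s : ℝ} (hs : 0 < s) {f : ℝ → ℝ}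
    (hf : Measurable f) :
    ∫ x in Ioi t, f x ∂gaussianReal m (s ^ 2).toNNReal =
      ∫ z in Ioi (-((m - t) / s)), stdPdf z * f (s * z + m) := by
  have hmap : (gaussianReal 0 1).map (fun z => s * z + m) = gaussianReal m (s ^ 2).toNNReal := by
    have h := (gaussianReal_add_const
      (gaussianReal_const_mul (HasLaw.id (μ := gaussianReal 0 1)) s) m).map_eq
    simp only [id, mul_zero, zero_add, mul_one] at h
    rw [h]
    congr 1
    ext
    simp [sq_nonneg]
  have hpre : (fun z => s * z + m) ⁻¹' Ioi t = Ioi (-((m - t) / s)) := by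
    ext z
    simp only [mem_preimage, mem_Ioi]
    rw [← neg_div, div_lt_iff₀ hs]
    constructor <;> intro h <;> linarith
  rw [← hmap, setIntegral_map measurableSet_Ioi hf.aestronglyMeasurable (by fun_prop), hpre,
    ← integral_indicator measurableSet_Ioi,
    integral_gaussianReal_eq_integral_smul one_ne_zero, gaussianPDFReal_zero_one,
    ← integral_indicator measurableSet_Ioi]
  congr 1
  ext z
  by_cases hz : z ∈ Ioi (-((m - t) / s)) <;> simp [hz]

lemma gaussianReal_real_Ioi (m t : ℝ) {s : ℝ} (hs : 0 < s) :
    (gaussianReal m (s ^ 2).toNNReal).real (Ioi t) = stdCdf ((m - t) / s) := by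
  have h := setIntegral_Ioi_gaussianReal m t hs (f := fun _ => 1) measurable_const
  simpa [setIntegral_Ioi_neg_stdPdf] using h

/-- The truncated first moment of a normal distribution. -/
lemma setIntegral_Ioi_id_gaussianReal (m t : ℝ) {s : ℝ} (hs : 0 < s) :
    ∫ x in Ioi t, x ∂gaussianReal m (s ^ 2).toNNReal =
      m * stdCdf ((m - t) / s) + s * stdPdf ((m - t) / s) := by
  rw [setIntegral_Ioi_gaussianReal m t hs (f := fun x => x) measurable_id]
  have h : ∀ z, stdPdf z * (s * z + m) = s * (z * stdPdf z) + m * stdPdf z := fun z => by ring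
  simp only [h]
  rw [integral_add (integrable_mul_stdPdf.const_mul s).integrableOn
      (integrable_stdPdf.const_mul m).integrableOn, integral_const_mul, integral_const_mul,
    setIntegral_Ioi_mul_stdPdf, setIntegral_Ioi_neg_stdPdf, stdPdf_neg, add_comm]

section IndependentFamily

variable {Ω ι : Type*} {mΩ : MeasurableSpace Ω} {P : Measure Ω} [IsProbabilityMeasure P]
  {X : ι → Ω → ℝ}

lemma map_sum_eq_gaussianReal (hmeas : ∀ j, Measurable (X j)) (hindep : iIndepFun X P) {m : ℝ}
    {v : NNReal} (hdist : ∀ j, P.map (X j) = gaussianReal m v) (S : Finset ι) :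
    P.map (∑ j ∈ S, X j) = gaussianReal (S.card * m) (S.card * v) := by
  classical
  induction S using Finset.induction_on with
  | empty =>
    simp only [Finset.sum_empty, Finset.card_empty, Nat.cast_zero, zero_mul, gaussianReal_zero_var]
    rw [Pi.zero_def, Measure.map_const]
    simp
  | insert a S ha ih =>
    rw [Finset.sum_insert ha, gaussianReal_add_gaussianReal_of_indepFun
      (hindep.indepFun_finsetSum_of_notMem hmeas ha).symm (hdist a) ih,
      Finset.card_insert_of_notMem ha]
    congr 1 <;> push_cast <;> ring

lemma map_average_eq_gaussianReal (hmeas : ∀ j, Measurable (X j)) (hindep : iIndepFun X P)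
    {m s : ℝ} (hdist : ∀ j, P.map (X j) = gaussianReal m (s ^ 2).toNNReal) {S : Finset ι}
    (hS : S.Nonempty) :
    P.map (fun ω => (S.card : ℝ)⁻¹ * ∑ j ∈ S, X j ω) =
      gaussianReal m ((s / Real.sqrt S.card) ^ 2).toNNReal := by
  have hc : (S.card : ℝ) ≠ 0 := by exact_mod_cast hS.card_pos.ne'
  have hsum : HasLaw (∑ j ∈ S, X j) (gaussianReal (S.card * m) (S.card * (s ^ 2).toNNReal)) P :=
    ⟨by fun_prop, map_sum_eq_gaussianReal hmeas hindep hdist S⟩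
  have h := (gaussianReal_const_mul hsum (S.card : ℝ)⁻¹).map_eq
  simp only [Finset.sum_apply] at h
  rw [h, inv_mul_cancel_left₀ hc]
  congr 1
  ext
  rw [Real.coe_toNNReal _ (sq_nonneg _), div_pow, Real.sq_sqrt (Nat.cast_nonneg _)]
  simp only [NNReal.coe_mul, NNReal.coe_mk, NNReal.coe_natCast, Real.coe_toNNReal _ (sq_nonneg s)]
  field_simp

/-- Members of an i.i.d. family are exchangeable given an event determined by their sum. -/
lemma setIntegral_eq_of_mem_of_mem (hmeas : ∀ j, Measurable (X j)) (hindep : iIndepFun X P)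
    {ν : Measure ℝ} (hdist : ∀ j, P.map (X j) = ν) {S : Finset ι} {B : Set ℝ}
    (hB : MeasurableSet B) {i j : ι} (hi : i ∈ S) (hj : j ∈ S) :
    ∫ ω in {ω | ∑ k ∈ S, X k ω ∈ B}, X i ω ∂P = ∫ ω in {ω | ∑ k ∈ S, X k ω ∈ B}, X j ω ∂P := by
  classical
  have hlaw : ∀ e : S ≃ S, P.map (fun ω (k : S) => X (e k) ω) = Measure.pi fun _ : S => ν := by
    intro e
    have h := (iIndepFun_iff_map_fun_eq_pi_map
      (fun k : S => (hmeas (e k)).aemeasurable (μ := P))).1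
        (hindep.precomp (Subtype.val_injective.comp e.injective))
    simpa only [hdist] using h
  let T : Set (S → ℝ) := {x | ∑ k, x k ∈ B}
  have hT : MeasurableSet T := by
    have : Measurable fun x : S → ℝ => ∑ k, x k := by fun_prop
    exact this hB
  have key : ∀ e : S ≃ S, ∫ x in T, x ⟨i, hi⟩ ∂Measure.pi (fun _ : S => ν) =
      ∫ ω in {ω | ∑ k ∈ S, X k ω ∈ B}, X (e ⟨i, hi⟩) ω ∂P := by
    intro e
    rw [← hlaw e, setIntegral_map hT (measurable_pi_apply _).aestronglyMeasurable (by fun_prop)]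
    congr 2
    ext ω
    simp only [T, mem_preimage, mem_ofPred_eq]
    rw [Equiv.sum_comp e (fun k : S => X k ω), Finset.sum_coe_sort S (fun k => X k ω)]
  have h := (key (Equiv.refl S)).symm.trans (key (Equiv.swap ⟨i, hi⟩ ⟨j, hj⟩))
  simpa using h

lemma setIntegral_average_gt (hmeas : ∀ j, Measurable (X j)) (hindep : iIndepFun X P)
    {m s : ℝ} (hs : 0 < s) (hdist : ∀ j, P.map (X j) = gaussianReal m (s ^ 2).toNNReal)
    {S : Finset ι} (t : ℝ) {j : ι} (hj : j ∈ S) :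
    ∫ ω in {ω | t < (S.card : ℝ)⁻¹ * ∑ k ∈ S, X k ω}, X j ω ∂P =
      m * stdCdf ((m - t) / (s / Real.sqrt S.card)) +
        s / Real.sqrt S.card * stdPdf ((m - t) / (s / Real.sqrt S.card)) := by
  have hS : S.Nonempty := ⟨j, hj⟩
  have hc : (0 : ℝ) < S.card := by exact_mod_cast hS.card_pos
  have hint : ∀ k, Integrable (X k) P := by
    intro k
    have h : Integrable id (P.map (X k)) :=
      hdist k ▸ (memLp_id_gaussianReal 1).integrable (by simp)
    exact h.comp_measurable (hmeas k)
  have hB : MeasurableSet {y : ℝ | t < (S.card : ℝ)⁻¹ * y} :=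
    measurableSet_lt measurable_const (by fun_prop)
  have hexch : ∀ k ∈ S, ∫ ω in {ω | t < (S.card : ℝ)⁻¹ * ∑ k ∈ S, X k ω}, X k ω ∂P =
      ∫ ω in {ω | t < (S.card : ℝ)⁻¹ * ∑ k ∈ S, X k ω}, X j ω ∂P := fun k hk =>
    setIntegral_eq_of_mem_of_mem hmeas hindep hdist hB hk hj
  have hsum : ∫ ω in {ω | t < (S.card : ℝ)⁻¹ * ∑ k ∈ S, X k ω},
      (S.card : ℝ)⁻¹ * ∑ k ∈ S, X k ω ∂P =
      ∫ ω in {ω | t < (S.card : ℝ)⁻¹ * ∑ k ∈ S, X k ω}, X j ω ∂P := by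
    rw [integral_const_mul, integral_finsetSum _ fun k _ => (hint k).integrableOn,
      Finset.sum_congr rfl hexch, Finset.sum_const, nsmul_eq_mul, inv_mul_cancel_left₀ hc.ne']
  rw [← hsum, ← setIntegral_Ioi_id_gaussianReal m t (div_pos hs (Real.sqrt_pos.2 hc)),
    ← map_average_eq_gaussianReal hmeas hindep hdist hS,
    setIntegral_map measurableSet_Ioi (by fun_prop) (by fun_prop)]
  rfl

lemma measureReal_average_gt (hmeas : ∀ j, Measurable (X j)) (hindep : iIndepFun X P)
    {m s : ℝ} (hs : 0 < s) (hdist : ∀ j, P.map (X j) = gaussianReal m (s ^ 2).toNNReal)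
    {S : Finset ι} (hS : S.Nonempty) (t : ℝ) :
    P.real {ω | t < (S.card : ℝ)⁻¹ * ∑ k ∈ S, X k ω} =
      stdCdf ((m - t) / (s / Real.sqrt S.card)) := by
  have hc : (0 : ℝ) < S.card := by exact_mod_cast hS.card_pos
  rw [← gaussianReal_real_Ioi m t (div_pos hs (Real.sqrt_pos.2 hc)),
    ← map_average_eq_gaussianReal hmeas hindep hdist hS,
    map_measureReal_apply (by fun_prop) measurableSet_Ioi]
  rfl

lemma setIntegral_average_gt_inter (hmeas : ∀ j, Measurable (X j)) (hindep : iIndepFun X P)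
    {m s : ℝ} (hs : 0 < s) (hdist : ∀ j, P.map (X j) = gaussianReal m (s ^ 2).toNNReal)
    {S T : Finset ι} (hST : Disjoint S T) (hT : T.Nonempty) (t u : ℝ) {j : ι} (hj : j ∈ S) :
    ∫ ω in {ω | t < (S.card : ℝ)⁻¹ * ∑ k ∈ S, X k ω} ∩
        {ω | u < (T.card : ℝ)⁻¹ * ∑ k ∈ T, X k ω}, X j ω ∂P =
      (m * stdCdf ((m - t) / (s / Real.sqrt S.card)) +
        s / Real.sqrt S.card * stdPdf ((m - t) / (s / Real.sqrt S.card))) *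
        stdCdf ((m - u) / (s / Real.sqrt T.card)) := by
  have hmeasSet : ∀ (R : Finset ι) (r : ℝ),
      MeasurableSet {ω | r < (R.card : ℝ)⁻¹ * ∑ k ∈ R, X k ω} := fun R r =>
    measurableSet_lt measurable_const (by fun_prop)
  have hpiSet : ∀ (R : Finset ι) (r : ℝ),
      MeasurableSet {x : R → ℝ | r < (R.card : ℝ)⁻¹ * ∑ k, x k} := fun R r =>
    measurableSet_lt measurable_const (by fun_prop)
  have h := (hindep.indepFun_finset S T hST hmeas).integral_fun_comp_mul_comp
    (f := {x : S → ℝ | t < (S.card : ℝ)⁻¹ * ∑ k, x k}.indicator fun x => x ⟨j, hj⟩)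
    (g := {x : T → ℝ | u < (T.card : ℝ)⁻¹ * ∑ k, x k}.indicator fun _ => (1 : ℝ))
    (by fun_prop) (by fun_prop)
    ((measurable_pi_apply _).indicator (hpiSet S t)).aestronglyMeasurable
    (measurable_const.indicator (hpiSet T u)).aestronglyMeasurable
  rw [← setIntegral_average_gt hmeas hindep hs hdist t hj,
    ← measureReal_average_gt hmeas hindep hs hdist hT u,
    ← integral_indicator ((hmeasSet S t).inter (hmeasSet T u)),
    ← integral_indicator (hmeasSet S t), ← integral_indicator_one (hmeasSet T u)]
  have hcoe : ∀ (R : Finset ι) (ω : Ω), ∑ k : R, X k ω = ∑ k ∈ R, X k ω := fun R ω =>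
    Finset.sum_coe_sort R fun k => X k ω
  simp only [indicator, mem_ofPred_eq, hcoe] at h
  simp only [indicator, mem_inter_iff, mem_ofPred_eq, Pi.one_apply]
  rw [← h]
  congr 1
  ext ω
  split_ifs <;> simp_all

end IndependentFamily

/-- Theorem 1, unanimous acceptance group rule: for `i ∈ {1,2}` and every `j ∈ S_i`,
`E[X_j·1_{G₁ ∩ G₂}] = (μ·F_i + σ_i·f_i)·F_{3−i}`. -/
theorem expected_increment_unanimous_acceptance
    {Ω ι : Type*} [MeasureSpace Ω] [IsProbabilityMeasure (ℙ : Measure Ω)]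
    (μ σ : ℝ) (hσ : 0 < σ)
    (X : ι → Ω → ℝ) (hmeas : ∀ j, Measurable (X j))
    (hindep : iIndepFun X ℙ)
    (hdist : ∀ j, Measure.map (X j) ℙ = gaussianReal μ ((σ ^ 2).toNNReal))
    (S₁ S₂ : Finset ι) (hdisj : Disjoint S₁ S₂)
    (g₁ g₂ : ℕ) (hcard₁ : S₁.card = g₁) (hcard₂ : S₂.card = g₂)
    (hg₁ : 1 ≤ g₁) (hg₂ : 1 ≤ g₂)
    (t₁ t₂ : ℝ)
    (A₁ A₂ : Ω → ℝ)
    (hA₁ : A₁ = fun ω => (g₁ : ℝ)⁻¹ * ∑ j ∈ S₁, X j ω)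
    (hA₂ : A₂ = fun ω => (g₂ : ℝ)⁻¹ * ∑ j ∈ S₂, X j ω)
    :
    (∀ j ∈ S₁, ∫ ω in {ω | t₁ < A₁ ω} ∩ {ω | t₂ < A₂ ω}, X j ω =
      (μ * stdCdf ((μ - t₁) / (σ / Real.sqrt g₁)) + (σ / Real.sqrt g₁) * stdPdf ((μ - t₁) / (σ / Real.sqrt g₁))) * stdCdf ((μ - t₂) / (σ / Real.sqrt g₂))) ∧
    (∀ j ∈ S₂, ∫ ω in {ω | t₁ < A₁ ω} ∩ {ω | t₂ < A₂ ω}, X j ω =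
      (μ * stdCdf ((μ - t₂) / (σ / Real.sqrt g₂)) + (σ / Real.sqrt g₂) * stdPdf ((μ - t₂) / (σ / Real.sqrt g₂))) * stdCdf ((μ - t₁) / (σ / Real.sqrt g₁))) := by
  subst hcard₁ hcard₂ hA₁ hA₂
  refine ⟨fun j hj => setIntegral_average_gt_inter hmeas hindep hσ hdist hdisj
    (Finset.card_pos.1 hg₂) t₁ t₂ hj, fun j hj => ?_⟩
  rw [inter_comm]
  exact setIntegral_average_gt_inter hmeas hindep hσ hdist hdisj.symm
    (Finset.card_pos.1 hg₁) t₂ t₁ hj
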